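/- arXiv:2206.06408 — 5 statements merged into one kernel-verified Lean document; each statement's English description precedes it below -/
import Mathlib

section
/- The set Ω_e := { cos(n)/n : n ∈ ℕ, n ≥ 1 } has finite Perron capacity; in fact P_{Ω_e} ≤ 6. -/
/-!
The capacity of `Ω_e` is bounded by finding, for every `M = 2 ^ N`, a subset of `Ω_e` that is a
small perturbation of a homothetic copy of `{0, 1, …, M - 1}`.

Since `1 / (2π)` is irrational, the positive integers are dense modulo `2π`, so there are integers
`n_k` with `cos n_k ≈ k / M` (`exists_cos_natCast_near`). By recurrence of the rotation by `1` on
`ℝ / 2πℤ`, there are arbitrarily large integers `T` that are nearly `0` modulo `2π`, and for these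
`cos (n_k + T) / (n_k + T) ≈ cos n_k / T ≈ k / (M T)` (`exists_near_progression`). Thus, after
scaling by `M T`, the chosen points lie within `1 / 4` of `0, 1, …, M - 1`. Two consecutive gaps of
index length `l` then lie in `[l - 1/2, l + 1/2]`, so each is at most three times the other, and
the Perron factor is at most `3 + 3 = 6` (`perronFactor_near_progression_le`).
-/

open MeasureTheory Real ENNReal Filter

noncomputable section

/-- The `k`-th smallest element (1-based) of a finite set of reals. -/
def nthU (U : Finset ℝ) (k : ℕ) : ℝ := (U.sort (· ≤ ·)).getD (k - 1) 0

/-- The Perron factor of a finite set of reals. -/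
def perronFactor (U : Finset ℝ) : ℝ :=
  sSup { g : ℝ | ∃ k l : ℕ, 1 ≤ k ∧ 1 ≤ l ∧ k + 2 * l ≤ U.card ∧
    g = (nthU U (k + 2 * l) - nthU U (k + l)) / (nthU U (k + l) - nthU U k) +
        (nthU U (k + l) - nthU U k) / (nthU U (k + 2 * l) - nthU U (k + l)) }

/-- The Perron capacity of a set of slopes. -/
def perronCapacity (Ω : Set ℝ) : ℝ≥0∞ :=
  Filter.atTop.liminf fun N : ℕ =>
    ⨅ (U : Finset ℝ) (_ : ↑U ⊆ Ω) (_ : U.card = 2 ^ N), ENNReal.ofReal (perronFactor U)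

instance : CompactSpace Real.Angle :=
  haveI : Fact (0 < 2 * π) := ⟨Real.two_pi_pos⟩
  inferInstanceAs (CompactSpace (AddCircle (2 * π)))

/-- Every angle is approached by arbitrarily large integers; this uses the irrationality of `π`. -/
lemma mapClusterPt_natCast_angle (x : Real.Angle) :
    MapClusterPt x atTop (fun n : ℕ => ((n : ℝ) : Real.Angle)) := by
  have hd : DenseRange (fun m : ℤ => m • ((1 : ℝ) : Real.Angle)) := by
    refine AddCircle.denseRange_zsmul_coe_iff.2 ?_
    have h : Irrational ((2 : ℕ) * π) := irrational_pi.natCast_mul two_ne_zero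
    simpa using h.inv
  have h := ((mapClusterPt_atTop_nsmul_tfae x ((1 : ℝ) : Real.Angle)).out 0 3).2 (hd x)
  have he : (fun n : ℕ => ((n : ℝ) : Real.Angle)) = fun n : ℕ => n • ((1 : ℝ) : Real.Angle) := by
    funext n
    rw [← Real.Angle.natCast_mul_eq_nsmul, mul_one]
  rw [he]
  exact h

lemma exists_cos_natCast_near {y δ : ℝ} (h₁ : -1 ≤ y) (h₂ : y ≤ 1) (hδ : 0 < δ) :
    ∃ n : ℕ, |Real.cos n - y| < δ := by
  have hc : ∀ᶠ θ in nhds ((Real.arccos y : ℝ) : Real.Angle), |Real.Angle.cos θ - y| < δ := by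
    have : ContinuousAt (fun θ => |Real.Angle.cos θ - y|) ((Real.arccos y : ℝ) : Real.Angle) :=
      ((Real.Angle.continuous_cos.sub continuous_const).abs).continuousAt
    refine this.eventually_lt continuousAt_const ?_
    simpa [Real.cos_arccos h₁ h₂] using hδ
  obtain ⟨n, hn⟩ := ((mapClusterPt_natCast_angle _).frequently hc).exists
  exact ⟨n, by simpa using hn⟩

/-- `Ω_e` contains points which, after a positive scaling, are within `1 / 4` of
`0, 1, …, M - 1`. -/
lemma exists_near_progression (M : ℕ) :
    ∃ (u : ℕ → ℝ) (c : ℝ), 0 < c ∧ ∀ k < M,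
      (∃ n : ℕ, 1 ≤ n ∧ u k = Real.cos n / n) ∧ |c * u k - k| ≤ 1 / 4 := by
  rcases Nat.eq_zero_or_pos M with rfl | hM
  · exact ⟨fun _ => 0, 1, one_pos, by simp⟩
  have hM' : (0 : ℝ) < M := by exact_mod_cast hM
  -- Three errors, each below `δ`, are added and then multiplied by `M`.
  set δ : ℝ := 1 / (12 * M) with hδ
  have hδ0 : 0 < δ := by positivity
  have hex : ∀ k : ℕ, ∃ n : ℕ, k < M → |Real.cos n - k / M| < δ := by
    intro k
    by_cases hk : k < M
    · have h0 : (0 : ℝ) ≤ k / M := by positivity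
      have h1 : (k : ℝ) / M ≤ 1 := by
        rw [div_le_one hM']
        exact_mod_cast hk.le
      obtain ⟨n, hn⟩ := exists_cos_natCast_near (by linarith) h1 hδ0
      exact ⟨n, fun _ => hn⟩
    · exact ⟨0, fun h => absurd h hk⟩
  choose n hn using hex
  have hrec : ∀ᶠ θ in nhds (0 : Real.Angle), ∀ k ∈ Finset.range M,
      |Real.Angle.cos (((n k : ℝ) : Real.Angle) + θ) - Real.cos (n k)| < δ := by
    rw [Filter.eventually_all_finset]
    intro k _
    have : ContinuousAt (fun θ =>
        |Real.Angle.cos (((n k : ℝ) : Real.Angle) + θ) - Real.cos (n k)|) (0 : Real.Angle) :=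
      (((Real.Angle.continuous_cos.comp (continuous_const.add continuous_id)).sub
        continuous_const).abs).continuousAt
    refine this.eventually_lt continuousAt_const ?_
    simpa using hδ0
  have hlarge : ∀ᶠ T : ℕ in atTop, ∀ k ∈ Finset.range M,
      |(T : ℝ) / ((n k + T : ℕ) : ℝ) - 1| < δ := by
    rw [Filter.eventually_all_finset]
    intro k _
    have h := tendsto_natCast_div_add_atTop (𝕜 := ℝ) (n k : ℝ)
    have h2 := (Metric.tendsto_nhds.1 h) δ hδ0
    filter_upwards [h2] with T hT
    rw [Real.dist_eq] at hT
    rwa [Nat.cast_add, add_comm]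
  obtain ⟨T, hT, hTl, hT1⟩ := (((mapClusterPt_natCast_angle 0).frequently hrec).and_eventually
    (hlarge.and (eventually_ge_atTop 1))).exists
  have hT0 : (0 : ℝ) < T := by exact_mod_cast hT1
  refine ⟨fun k => Real.cos ((n k + T : ℕ) : ℝ) / ((n k + T : ℕ) : ℝ), M * T, by positivity,
    fun k hk => ⟨⟨n k + T, by omega, rfl⟩, ?_⟩⟩
  have e1 := hn k hk
  have e2 := hT k (Finset.mem_range.2 hk)
  have e3 := hTl k (Finset.mem_range.2 hk)
  rw [← Real.Angle.coe_add, Real.Angle.cos_coe, ← Nat.cast_add] at e2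
  have e4 := Real.abs_cos_le_one ((n k + T : ℕ) : ℝ)
  set s : ℝ := (T : ℝ) / ((n k + T : ℕ) : ℝ)
  set C : ℝ := Real.cos ((n k + T : ℕ) : ℝ)
  have hEq : (M : ℝ) * T * (C / ((n k + T : ℕ) : ℝ)) - k
      = M * ((s - 1) * C + (C - Real.cos (n k)) + (Real.cos (n k) - k / M)) := by
    simp only [s]
    field_simp
    ring
  have e5 : |(s - 1) * C| ≤ δ := by
    rw [abs_mul]
    nlinarith [abs_nonneg (s - 1), abs_nonneg C]
  have e6 : |(s - 1) * C + (C - Real.cos (n k)) + (Real.cos (n k) - k / M)| ≤ 3 * δ := by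
    refine (abs_add_three _ _ _).trans ?_
    linarith
  change |(M : ℝ) * T * (C / ((n k + T : ℕ) : ℝ)) - k| ≤ 1 / 4
  rw [hEq, abs_mul, abs_of_pos hM']
  calc (M : ℝ) * _ ≤ M * (3 * δ) := mul_le_mul_of_nonneg_left e6 hM'.le
    _ = 1 / 4 := by rw [hδ]; field_simp; norm_num

/-- An increasing enumeration `u` of the finite set agrees with `nthU` up to the index shift. -/
lemma nthU_map_range {u : ℕ → ℝ} {M : ℕ} (hu : ∀ i j, i < j → j < M → u i < u j)
    {k : ℕ} (hk : k < M) : nthU ((List.range M).map u).toFinset (k + 1) = u k := by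
  have hp : ((List.range M).map u).Pairwise (· < ·) := by
    rw [List.pairwise_map]
    refine List.pairwise_lt_range.imp_of_mem ?_
    intro a b _ hb hab
    exact hu a b hab (List.mem_range.1 hb)
  have hs := (List.toFinset_sort (· ≤ ·) hp.nodup).2 (hp.imp le_of_lt)
  simp [nthU, hs, hk]

lemma perronFactor_near_progression_le {u : ℕ → ℝ} {M : ℕ} {c : ℝ} (hc : 0 < c)
    (h : ∀ k < M, |c * u k - k| ≤ 1 / 4) :
    (((List.range M).map u).toFinset).card = M ∧
      perronFactor ((List.range M).map u).toFinset ≤ 6 := by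
  -- Index steps of length `l` correspond to scaled gaps in `[l - 1/2, l + 1/2]`.
  have gap : ∀ i l, i + l < M → (l : ℝ) - 1 / 2 ≤ c * (u (i + l) - u i) ∧
      c * (u (i + l) - u i) ≤ l + 1 / 2 := by
    intro i l hl
    have h1 := abs_le.1 (h (i + l) hl)
    have h2 := abs_le.1 (h i (by omega))
    push_cast at h1
    constructor <;> nlinarith
  have hu : ∀ i j, i < j → j < M → u i < u j := by
    intro i j hij hj
    obtain ⟨l, rfl⟩ := Nat.exists_eq_add_of_lt hij
    have := (gap i (l + 1) (by omega)).1
    push_cast at this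
    have hl : (0 : ℝ) ≤ l := l.cast_nonneg
    have h3 : 0 < c * (u (i + (l + 1)) - u i) := by linarith
    exact sub_pos.1 (pos_of_mul_pos_right h3 hc.le)
  have hcard : (((List.range M).map u).toFinset).card = M := by
    have hnd : ((List.range M).map u).Nodup := by
      refine List.Nodup.map_on ?_ List.nodup_range
      intro x hx y hy hxy
      rw [List.mem_range] at hx hy
      rcases lt_trichotomy x y with hlt | heq | hlt
      · exact absurd hxy (hu x y hlt hy).ne
      · exact heq
      · exact absurd hxy (hu y x hlt hx).ne'
    rw [List.toFinset_card_of_nodup hnd]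
    simp
  refine ⟨hcard, Real.sSup_le ?_ (by norm_num)⟩
  rintro g ⟨k, l, hk, hl, hkl, rfl⟩
  rw [hcard] at hkl
  obtain ⟨k, rfl⟩ := Nat.exists_eq_add_of_le' hk
  rw [show k + 1 + 2 * l = (k + l + l) + 1 by ring, show k + 1 + l = (k + l) + 1 by ring,
    nthU_map_range hu (by omega), nthU_map_range hu (by omega), nthU_map_range hu (by omega)]
  have ga := gap (k + l) l (by omega)
  have gb := gap k l (by omega)
  set a := u (k + l + l) - u (k + l)
  set b := u (k + l) - u k
  have hl' : (1 : ℝ) ≤ l := by exact_mod_cast hl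
  have ha : 0 < a := pos_of_mul_pos_right (by linarith : 0 < c * a) hc.le
  have hb : 0 < b := pos_of_mul_pos_right (by linarith : 0 < c * b) hc.le
  -- `l + 1/2 ≤ 3 (l - 1/2)` because `l ≥ 1`.
  have hab : a ≤ 3 * b := le_of_mul_le_mul_left (by linarith : c * a ≤ c * (3 * b)) hc
  have hba : b ≤ 3 * a := le_of_mul_le_mul_left (by linarith : c * b ≤ c * (3 * a)) hc
  have h1 : a / b ≤ 3 := (div_le_iff₀ hb).2 hab
  have h2 : b / a ≤ 3 := (div_le_iff₀ ha).2 hba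
  linarith

/-- The set `Ω_e = { cos n / n : n ≥ 1 }` has Perron capacity at most `6`;
in particular it is finite. -/
theorem perronCapacity_omega_e_le_six :
    perronCapacity { x : ℝ | ∃ n : ℕ, 1 ≤ n ∧ x = Real.cos n / n } ≤ 6 ∧
    perronCapacity { x : ℝ | ∃ n : ℕ, 1 ≤ n ∧ x = Real.cos n / n } < ⊤ := by
  have key : perronCapacity { x : ℝ | ∃ n : ℕ, 1 ≤ n ∧ x = Real.cos n / n } ≤ 6 := by
    refine liminf_le_of_frequently_le' (Eventually.of_forall fun N => ?_).frequently
    obtain ⟨u, c, hc, hu⟩ := exists_near_progression (2 ^ N)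
    obtain ⟨hcard, hP⟩ := perronFactor_near_progression_le hc fun k hk => (hu k hk).2
    refine iInf_le_of_le ((List.range (2 ^ N)).map u).toFinset <| iInf_le_of_le ?_ <|
      iInf_le_of_le hcard ?_
    · intro x hx
      simp only [List.coe_toFinset, List.mem_map, List.mem_range, Set.mem_ofPred_eq] at hx
      obtain ⟨k, hk, rfl⟩ := hx
      exact (hu k hk).1
    · exact ENNReal.ofReal_le_of_le_toReal (by simpa using hP)
  exact ⟨key, key.trans_lt (by norm_num)⟩
end
end

section
/- For every N ∈ ℕ there exists a subset U of Ω_e := { cos(n)/n : n ∈ ℕ, n ≥ 1 } with cardinality exactly 2^N and Perron factor G_U ≤ 6. -/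
/-!
The set `Ω_e` contains arbitrarily long, arbitrarily good approximate arithmetic progressions.
Put `M = 2 ^ N`. Since `π` is irrational, `ℤ + 2πℤ` is dense, so (`cos` being even) there are
natural numbers `m₀, …, m_{M-1}` with `cos mᵢ` close to `i / M`
(`exists_nat_abs_cos_sub_lt`). Dirichlet's approximation theorem gives an arbitrarily large
natural number `A` close to a multiple of `2π` (`exists_nat_ge_abs_sub_two_pi_lt`). Then
`cos (A + mᵢ)` is close to `cos mᵢ`, and `A / (A + mᵢ)` is close to `1`, so the points
`uᵢ = cos (A + mᵢ) / (A + mᵢ)` satisfy `|A * M * uᵢ - i| ≤ 1 / 4`.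

For such points, `A * M * (u_{i+l} - uᵢ)` lies between `l / 2` and `3 * l / 2`. Hence both ratios
in the Perron factor are at most `3` (`perronFactor_toFinset_le_six`).
-/

open MeasureTheory Real ENNReal Filter

noncomputable section

/-- The values `cos m`, `m ∈ ℕ`, are dense in `[-1, 1]`. -/
theorem exists_nat_abs_cos_sub_lt {t ε : ℝ} (h₁ : -1 ≤ t) (h₂ : t ≤ 1) (hε : 0 < ε) :
    ∃ m : ℕ, |Real.cos m - t| < ε := by
  have hirr : Irrational (1 / (2 * π)) := by
    rw [one_div, irrational_inv_iff]
    exact_mod_cast irrational_pi.natCast_mul (m := 2) two_ne_zero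
  obtain ⟨y, hy, hdist⟩ :=
    (dense_addSubgroupClosure_pair_iff.2 hirr).exists_dist_lt (Real.arccos t) hε
  obtain ⟨m, n, rfl⟩ := AddSubgroup.mem_closure_pair.1 hy
  refine ⟨m.natAbs, ?_⟩
  have hcos : Real.cos (m.natAbs : ℕ) = Real.cos (m • (1 : ℝ) + n • (2 * π)) := by
    rw [Nat.cast_natAbs, Int.cast_abs, Real.cos_abs]
    simp [Real.cos_add_int_mul_two_pi]
  rw [hcos, ← Real.cos_arccos h₁ h₂]
  refine (Real.abs_cos_sub_cos_le _ _).trans_lt ?_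
  rwa [dist_comm, Real.dist_eq] at hdist

/-- There are arbitrarily large natural numbers arbitrarily close to multiples of `2π`. -/
theorem exists_nat_ge_abs_sub_two_pi_lt (K : ℕ) {ε : ℝ} (hε : 0 < ε) :
    ∃ (A : ℕ) (j : ℤ), K ≤ A ∧ |(A : ℝ) - j * (2 * π)| < ε := by
  obtain ⟨n, hn⟩ := exists_nat_gt (2 * π / ε)
  have hn0 : (0 : ℝ) < n := lt_trans (by positivity) hn
  -- Approximating multiples of `K / (2π)` makes the resulting `A` a multiple of `K`.
  obtain ⟨j, k, hk, -, h⟩ :=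
    Real.exists_int_int_abs_mul_sub_le (K / (2 * π)) (n := n) (by exact_mod_cast hn0)
  lift k to ℕ using hk.le
  have hk' : 1 ≤ k := by exact_mod_cast hk
  refine ⟨k * K, j, Nat.le_mul_of_pos_left K hk', ?_⟩
  have hpi : (0 : ℝ) < 2 * π := by positivity
  have heq : ((k * K : ℕ) : ℝ) - j * (2 * π)
      = (((k : ℤ) : ℝ) * (K / (2 * π)) - j) * (2 * π) := by
    push_cast
    field_simp
  rw [heq, abs_mul, abs_of_pos hpi]
  calc _ ≤ 1 / ((n : ℝ) + 1) * (2 * π) := by gcongr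
    _ < ε := by
      rw [div_lt_iff₀ hε] at hn
      rw [one_div_mul_eq_div, div_lt_iff₀ (by positivity)]
      nlinarith

/-- If the scaled points `c * u i` are within `1 / 4` of `i`, then their gaps over `l` steps lie
between `l / 2` and `3 * l / 2`. -/
theorem gap_bounds {M : ℕ} {c : ℝ} {u : ℕ → ℝ} (h : ∀ i < M, |c * u i - i| ≤ 1 / 4)
    {i l : ℕ} (hl : 1 ≤ l) (hi : i + l < M) :
    (l : ℝ) / 2 ≤ c * (u (i + l) - u i) ∧ c * (u (i + l) - u i) ≤ 3 * l / 2 := by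
  have h₁ := abs_le.1 (h i (by omega))
  have h₂ := abs_le.1 (h (i + l) hi)
  have hl' : (1 : ℝ) ≤ l := by exact_mod_cast hl
  push_cast at h₂
  constructor <;> nlinarith

/-- Points that are, up to scaling, within `1 / 4` of `0, 1, …, M - 1` are distinct and form a
set with Perron factor at most `6`. -/
theorem perronFactor_toFinset_le_six {M : ℕ} {c : ℝ} (hc : 0 < c) {u : ℕ → ℝ}
    (h : ∀ i < M, |c * u i - i| ≤ 1 / 4) :
    ((List.range M).map u).toFinset.card = M ∧
      perronFactor ((List.range M).map u).toFinset ≤ 6 := by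
  have hlt : ∀ i j, i < j → j < M → u i < u j := by
    intro i j hij hj
    obtain ⟨l, rfl⟩ := Nat.exists_eq_add_of_lt hij
    have := (gap_bounds h (i := i) (l := l + 1) (by omega) (by omega)).1
    have hpos : 0 < c * (u (i + (l + 1)) - u i) := lt_of_lt_of_le (by positivity) this
    exact sub_pos.1 ((mul_pos_iff_of_pos_left hc).1 hpos)
  have hpw : ((List.range M).map u).Pairwise (· < ·) := by
    rw [List.pairwise_map]
    refine List.pairwise_lt_range.imp_of_mem ?_
    intro a b _ hb hab
    exact hlt a b hab (List.mem_range.1 hb)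
  have hnd : ((List.range M).map u).Nodup := hpw.imp fun hab => hab.ne
  have hcard : ((List.range M).map u).toFinset.card = M := by
    rw [List.toFinset_card_of_nodup hnd]
    simp
  have hsort : ((List.range M).map u).toFinset.sort (· ≤ ·) = (List.range M).map u :=
    (List.toFinset_sort _ hnd).2 (hpw.imp fun hab => hab.le)
  have hnth : ∀ i < M, nthU ((List.range M).map u).toFinset (i + 1) = u i := by
    intro i hi
    rw [nthU, hsort]
    simp [hi]
  refine ⟨hcard, Real.sSup_le ?_ (by norm_num)⟩
  rintro g ⟨k, l, hk, hl, hkl, rfl⟩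
  rw [hcard] at hkl
  obtain ⟨i, rfl⟩ := Nat.exists_eq_add_of_le' hk
  rw [show i + 1 + 2 * l = i + l + l + 1 by ring, show i + 1 + l = i + l + 1 by ring,
    hnth _ (by omega), hnth _ (by omega), hnth _ (by omega)]
  obtain ⟨a₁, a₂⟩ := gap_bounds h (i := i) hl (by omega)
  obtain ⟨b₁, b₂⟩ := gap_bounds h (i := i + l) hl (by omega)
  have hl' : (0 : ℝ) < l := by exact_mod_cast hl
  have ratio_le : ∀ x y : ℝ, (l : ℝ) / 2 ≤ c * x → c * y ≤ 3 * l / 2 → y / x ≤ 3 := by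
    intro x y hx hy
    have hx0 : 0 < x := (mul_pos_iff_of_pos_left hc).1 (lt_of_lt_of_le (by positivity) hx)
    rw [div_le_iff₀ hx0]
    refine le_of_mul_le_mul_left ?_ hc
    linarith
  linarith [ratio_le _ _ a₁ b₂, ratio_le _ _ b₁ a₂]

/-- Replacing `cos m` by `A * (cos (A + m) / (A + m))` costs at most the distance from `A` to
a multiple of `2π`, plus `m / A`. -/
theorem abs_mul_cos_div_sub_cos_le {A : ℕ} (hA : 1 ≤ A) (m : ℕ) (j : ℤ) :
    |A * (Real.cos (A + m : ℕ) / (A + m : ℕ)) - Real.cos m|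
      ≤ |(A : ℝ) - j * (2 * π)| + m / A := by
  have hA' : (0 : ℝ) < A := by exact_mod_cast hA
  have hperiod : Real.cos m = Real.cos (m + j * (2 * π)) :=
    (Real.cos_add_int_mul_two_pi _ _).symm
  have h₁ : |Real.cos (A + m : ℕ) - Real.cos m| ≤ |(A : ℝ) - j * (2 * π)| := by
    rw [hperiod]
    refine (Real.abs_cos_sub_cos_le _ _).trans_eq ?_
    push_cast
    congr 1
    ring
  have h₂ : |A * (Real.cos (A + m : ℕ) / (A + m : ℕ)) - Real.cos (A + m : ℕ)| ≤ m / A := by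
    have heq : A * (Real.cos (A + m : ℕ) / (A + m : ℕ)) - Real.cos (A + m : ℕ)
        = -(Real.cos (A + m : ℕ) * (m / (A + m))) := by
      push_cast
      field_simp
      ring
    rw [heq, abs_neg, abs_mul, abs_of_nonneg (a := (m : ℝ) / (A + m)) (by positivity)]
    calc _ ≤ 1 * ((m : ℝ) / (A + m)) := by
          gcongr
          exact Real.abs_cos_le_one _
      _ ≤ m / A := by
          rw [one_mul]
          gcongr
          simp
  calc _ ≤ _ := abs_sub_le _ (Real.cos (A + m : ℕ)) _
    _ ≤ _ := by linarith

/-- For every `N` there is a subset of `Ω_e = { cos n / n : n ≥ 1 }` of cardinality `2^N`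
whose Perron factor is at most `6`. -/
theorem exists_subset_omega_e_perronFactor_le_six (N : ℕ) :
    ∃ U : Finset ℝ, ↑U ⊆ { x : ℝ | ∃ n : ℕ, 1 ≤ n ∧ x = Real.cos n / n } ∧
      U.card = 2 ^ N ∧ perronFactor U ≤ 6 := by
  obtain ⟨M, hM, hMpos⟩ : ∃ M : ℕ, M = 2 ^ N ∧ 0 < M := ⟨_, rfl, by positivity⟩
  rw [← hM]
  have hM' : (0 : ℝ) < M := by exact_mod_cast hMpos
  -- Three errors of size at most `ε` are allowed, and `3 * ε * M ≤ 1 / 4`.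
  obtain ⟨ε, hεM, hε⟩ : ∃ ε : ℝ, ε * M = 1 / 12 ∧ 0 < ε :=
    ⟨1 / 12 / M, by field_simp, by positivity⟩
  have hex : ∀ i : ℕ, ∃ m : ℕ, i < M → |Real.cos m - i / M| < ε := by
    intro i
    by_cases hi : i < M
    · have hi' : (i : ℝ) ≤ M := by exact_mod_cast hi.le
      have h0 : (0 : ℝ) ≤ i / M := by positivity
      obtain ⟨m, hm⟩ :=
        exists_nat_abs_cos_sub_lt (by linarith) (div_le_one_of_le₀ hi' hM'.le) hε
      exact ⟨m, fun _ => hm⟩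
    · exact ⟨0, fun h => absurd h hi⟩
  choose m hm using hex
  obtain ⟨K, hK⟩ := exists_nat_gt ((∑ i ∈ Finset.range M, (m i : ℝ)) / ε)
  obtain ⟨A, j, hKA, hA⟩ := exists_nat_ge_abs_sub_two_pi_lt (max K 1) hε
  have hA1 : 1 ≤ A := (le_max_right _ _).trans hKA
  have hA' : (0 : ℝ) < A := by exact_mod_cast hA1
  have hmA : ∀ i < M, (m i : ℝ) / A ≤ ε := by
    intro i hi
    have hsum : (m i : ℝ) ≤ ∑ i ∈ Finset.range M, (m i : ℝ) :=
      Finset.single_le_sum (f := fun i => (m i : ℝ)) (fun _ _ => Nat.cast_nonneg _)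
        (Finset.mem_range.2 hi)
    have hKA' : (K : ℝ) ≤ A := by exact_mod_cast (le_max_left _ _).trans hKA
    rw [div_lt_iff₀ hε] at hK
    rw [div_le_iff₀ hA']
    nlinarith
  have hu : ∀ i < M,
      |A * M * (Real.cos (A + m i : ℕ) / (A + m i : ℕ)) - i| ≤ 1 / 4 := by
    intro i hi
    have heq : A * M * (Real.cos (A + m i : ℕ) / (A + m i : ℕ)) - i
        = (A * (Real.cos (A + m i : ℕ) / (A + m i : ℕ)) - i / M) * M := by
      field_simp
    have hdist := abs_sub_le (A * (Real.cos (A + m i : ℕ) / (A + m i : ℕ)))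
      (Real.cos (m i)) (i / M)
    have hle := abs_mul_cos_div_sub_cos_le hA1 (m i) j
    have hbound : |A * (Real.cos (A + m i : ℕ) / (A + m i : ℕ)) - i / M| ≤ 3 * ε := by
      linarith [hm i hi, hmA i hi]
    rw [heq, abs_mul, abs_of_pos hM']
    calc _ ≤ 3 * ε * M := by gcongr
      _ = 1 / 4 := by linarith
  obtain ⟨hcard, hperron⟩ := perronFactor_toFinset_le_six (c := A * M) (by positivity)
    (u := fun i => Real.cos (A + m i : ℕ) / (A + m i : ℕ)) hu
  refine ⟨_, ?_, hcard, hperron⟩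
  intro x hx
  simp only [List.coe_toFinset, List.mem_map, Set.mem_ofPred_eq] at hx
  obtain ⟨i, -, rfl⟩ := hx
  exact ⟨A + m i, by omega, rfl⟩
end
end

section
/- For every N ∈ ℕ there exists a subset U of Ω_s := { sin(n)/n : n ∈ ℕ, n ≥ 1 } with cardinality exactly 2^N and Perron factor G_U ≤ 6; consequently the Perron capacity of Ω_s satisfies P_{Ω_s} ≤ 6 < ∞. -/
/-!
The set `Ω_s` contains arbitrarily long perturbed arithmetic progressions, up to scaling.
By Dirichlet's theorem and the irrationality of `π` there is a positive integer `q` whose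
signed distance `δ` to some multiple of `2π` is nonzero and as small as desired, so that
`sin (j q) = sin (j δ) ≈ j δ` for `j ≤ M`. A second application gives a much larger integer `T`
that is extremely close to a multiple of `2π`. Then `T * sin (T + j q) / (T + j q)` is within
`|δ| / 4` of `j δ` for all `j ≤ M` (`exists_near_progression`).

After rescaling (and reversing the order if `δ < 0`) this gives points `w i` of `Ω_s` for which
`a * w i + b` is within `1 / 4` of `i`. Two adjacent blocks of `l` steps then have lengths in
`[l - 1/2, l + 1/2]`, so their ratio lies in `[1/3, 3]` and the Perron factor is at most
`6` (`perronFactor_le_of_near`).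
-/

open MeasureTheory Real ENNReal Filter

noncomputable section

lemma exists_nat_near_two_pi {ε : ℝ} (hε : 0 < ε) (K : ℕ) :
    ∃ n : ℕ, 0 < n ∧ K ≤ n ∧ ∃ p : ℤ, |(n : ℝ) - p * (2 * π)| ≤ ε := by
  have hπ : 0 < 2 * π := by positivity
  obtain ⟨m, hm⟩ := exists_nat_gt (2 * π * (K + 1) / ε)
  have hm0 : 0 < m := by
    have : (0 : ℝ) < m := lt_of_le_of_lt (by positivity) hm
    exact_mod_cast this
  obtain ⟨k, hk, -, h⟩ := Real.exists_nat_abs_mul_sub_round_le (1 / (2 * π)) hm0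
  -- Multiplying an approximate period by `K + 1` makes it at least `K`.
  refine ⟨(K + 1) * k, by positivity, by nlinarith,
    (K + 1) * round ((k : ℝ) * (1 / (2 * π))), ?_⟩
  generalize round ((k : ℝ) * (1 / (2 * π))) = r at h ⊢
  have e : (((K + 1) * k : ℕ) : ℝ) - ((((K : ℤ) + 1) * r : ℤ) : ℝ) * (2 * π)
      = ((K + 1) * (2 * π)) * ((k : ℝ) * (1 / (2 * π)) - r) := by
    push_cast
    field_simp
  rw [e, abs_mul, abs_of_pos (by positivity)]
  rw [div_lt_iff₀ hε] at hm
  calc (K + 1) * (2 * π) * |(k : ℝ) * (1 / (2 * π)) - r|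
      ≤ (K + 1) * (2 * π) * (1 / (m + 1)) := by gcongr
    _ ≤ ε := by
      rw [mul_one_div, div_le_iff₀ (by positivity)]
      nlinarith

lemma nat_sub_mul_two_pi_ne_zero {n : ℕ} (hn : 0 < n) (p : ℤ) :
    (n : ℝ) - p * (2 * π) ≠ 0 := by
  intro h
  have hp : p ≠ 0 := by
    rintro rfl
    simp at h
    omega
  have h1 : Irrational (((2 * p : ℤ) : ℝ) * π) := irrational_pi.intCast_mul (by omega)
  apply h1.ne_nat n
  push_cast
  linarith

lemma abs_sin_sub_self_le (x : ℝ) : |Real.sin x - x| ≤ |x| ^ 3 := by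
  have key : ∀ y : ℝ, 0 < y → |Real.sin y - y| ≤ |y| ^ 3 := by
    intro y hy
    have h1 := Real.sin_gt_sub_cube hy
    have h2 := Real.sin_lt hy
    have h3 : 0 < y ^ 3 := by positivity
    rw [abs_of_pos hy, abs_le]
    constructor <;> linarith
  rcases lt_trichotomy x 0 with h | h | h
  · have := key (-x) (by linarith)
    rwa [Real.sin_neg, abs_neg, ← abs_neg, show -(-Real.sin x - -x) = Real.sin x - x by ring]
      at this
  · simp [h]
  · exact key x h

/-- Up to the scaling factor `a`, the set `Ω_s` contains a perturbed arithmetic progression of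
any length, whose step `δ` may be negative. -/
lemma exists_near_progression_s3 (M : ℕ) :
    ∃ (δ a : ℝ) (n : ℕ → ℕ), δ ≠ 0 ∧ 0 < a ∧ ∀ j ≤ M, 1 ≤ n j ∧
      |a * (Real.sin (n j) / n j) - j * δ| ≤ |δ| / 4 := by
  -- With `|δ| ≤ 1 / (8 (M + 1) ^ 3)`, the cubic error of `sin (j δ)` is at most `|δ| / 8`.
  obtain ⟨q, hq0, -, p, hq⟩ :=
    exists_nat_near_two_pi (ε := 1 / (8 * ((M : ℝ) + 1) ^ 3)) (by positivity) 0
  have hδ := nat_sub_mul_two_pi_ne_zero hq0 p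
  set δ : ℝ := q - p * (2 * π) with hδdef
  have hδ' : 0 < |δ| := abs_pos.2 hδ
  obtain ⟨K, hK⟩ := exists_nat_gt (16 * M * q / |δ|)
  obtain ⟨T, hT0, hTK, r, hT⟩ := exists_nat_near_two_pi (ε := |δ| / 16) (by positivity) K
  set τ : ℝ := T - r * (2 * π) with hτdef
  have hTr : (0 : ℝ) < T := by exact_mod_cast hT0
  have hKT : (K : ℝ) ≤ T := by exact_mod_cast hTK
  refine ⟨δ, T, fun j => T + j * q, hδ, hTr, fun j hj => ⟨Nat.le_add_right_of_le hT0, ?_⟩⟩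
  have hjM : (j : ℝ) ≤ M := by exact_mod_cast hj
  have hj0 : (0 : ℝ) ≤ j := by positivity
  have hs : Real.sin ((T + j * q : ℕ) : ℝ) = Real.sin (j * δ + τ) := by
    rw [← Real.sin_sub_int_mul_two_pi _ (j * p + r)]
    congr 1
    push_cast
    rw [hδdef, hτdef]
    ring
  rw [hs]
  push_cast
  have hD : (0 : ℝ) < T + j * q := by positivity
  have h1 : |Real.sin (j * δ) - j * δ| ≤ |δ| / 8 := by
    refine (abs_sin_sub_self_le _).trans ?_
    rw [abs_mul, abs_of_nonneg hj0, mul_pow]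
    rw [le_div_iff₀ (by positivity)] at hq
    have hM1 : (1 : ℝ) ≤ (M + 1) ^ 3 := one_le_pow₀ (by linarith)
    have hd1 : |δ| ≤ 1 := by nlinarith
    have hj3 : (j : ℝ) ^ 3 ≤ (M + 1) ^ 3 := by gcongr; linarith
    have hd3 : |δ| ^ 3 ≤ |δ| * |δ| := by nlinarith [mul_pos hδ' hδ']
    calc (j : ℝ) ^ 3 * |δ| ^ 3 ≤ (M + 1) ^ 3 * (|δ| * |δ|) := by gcongr
      _ ≤ |δ| / 8 := by nlinarith
  have h2 : |Real.sin (j * δ + τ) - Real.sin (j * δ)| ≤ |δ| / 16 := by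
    refine (Real.abs_sin_sub_sin_le _ _).trans ?_
    rwa [add_sub_cancel_left]
  have h3 : |T * (Real.sin (j * δ + τ) / (T + j * q)) - Real.sin (j * δ + τ)| ≤ |δ| / 16 := by
    have e : T * (Real.sin (j * δ + τ) / (T + j * q)) - Real.sin (j * δ + τ)
        = -(Real.sin (j * δ + τ) * (j * q / (T + j * q))) := by
      field_simp
      ring
    rw [e, abs_neg, abs_mul, abs_of_nonneg (a := j * q / (T + j * q : ℝ)) (by positivity)]
    have hb : (j * q / (T + j * q) : ℝ) ≤ |δ| / 16 := by
      rw [div_le_iff₀ hD]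
      rw [div_lt_iff₀ hδ'] at hK
      have : (j : ℝ) * q ≤ M * q := by gcongr
      have h5 : (K : ℝ) * |δ| ≤ T * |δ| := by gcongr
      have h6 : 0 ≤ |δ| * ((j : ℝ) * q) := by positivity
      nlinarith
    calc _ ≤ 1 * (|δ| / 16) := by
          gcongr
          exact Real.abs_sin_le_one _
      _ = _ := one_mul _
  rw [abs_le] at *
  constructor <;> linarith [h1.1, h1.2, h2.1, h2.2, h3.1, h3.2]

lemma nthU_toFinset {w : ℕ → ℝ} {M : ℕ} (hw : ∀ i j, i < j → j < M → w i < w j)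
    {k : ℕ} (hk : 1 ≤ k) (hkM : k ≤ M) :
    nthU ((List.range M).map w).toFinset k = w (k - 1) ∧
      ((List.range M).map w).toFinset.card = M := by
  have hlt : ((List.range M).map w).Pairwise (· < ·) := by
    rw [List.pairwise_map]
    refine List.pairwise_lt_range.imp_of_mem ?_
    intro a b _ hb hab
    exact hw a b hab (List.mem_range.1 hb)
  have hnd : ((List.range M).map w).Nodup := hlt.imp (fun h => h.ne)
  have hs := (List.toFinset_sort (r := (· ≤ ·)) hnd).2 (hlt.imp (fun h => h.le))
  refine ⟨?_, by rw [List.toFinset_card_of_nodup hnd]; simp⟩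
  unfold nthU
  rw [hs, List.getD_eq_getElem _ _ (by simp; omega)]
  simp

lemma div_add_div_le_six {x y l : ℝ} (hl : 1 ≤ l) (hx : |x - l| ≤ 1 / 2)
    (hy : |y - l| ≤ 1 / 2) : x / y + y / x ≤ 6 := by
  rw [abs_le] at hx hy
  have hx0 : 0 < x := by linarith
  have hy0 : 0 < y := by linarith
  have h1 : x / y ≤ 3 := by rw [div_le_iff₀ hy0]; linarith
  have h2 : y / x ≤ 3 := by rw [div_le_iff₀ hx0]; linarith
  linarith

/-- A set that is affinely within `1 / 4` of `{0, …, M - 1}` has Perron factor at most `6`. -/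
lemma perronFactor_le_of_near {M : ℕ} (hM : 1 ≤ M) {w : ℕ → ℝ} {a b : ℝ} (ha : 0 < a)
    (h : ∀ i < M, |a * w i + b - i| ≤ 1 / 4) :
    ((List.range M).map w).toFinset.card = M ∧
      perronFactor ((List.range M).map w).toFinset ≤ 6 := by
  have hw : ∀ i j, i < j → j < M → w i < w j := by
    intro i j hij hj
    have h1 := abs_le.1 (h i (hij.trans hj))
    have h2 := abs_le.1 (h j hj)
    have h3 : (i : ℝ) + 1 ≤ j := by exact_mod_cast hij
    have : a * w i < a * w j := by linarith
    exact lt_of_mul_lt_mul_left this ha.le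
  have hc := (nthU_toFinset hw le_rfl hM).2
  refine ⟨hc, Real.sSup_le ?_ (by norm_num)⟩
  rintro g ⟨k, l, hk, hl, hkl, rfl⟩
  rw [hc] at hkl
  rw [(nthU_toFinset hw hk (by omega)).1, (nthU_toFinset hw (k := k + l) (by omega) (by omega)).1,
    (nthU_toFinset hw (k := k + 2 * l) (by omega) hkl).1]
  obtain ⟨k, rfl⟩ : ∃ k', k = k' + 1 := ⟨k - 1, by omega⟩
  have e1 : k + 1 + 2 * l - 1 = k + 2 * l := by omega
  have e2 : k + 1 + l - 1 = k + l := by omega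
  rw [e1, e2, Nat.add_sub_cancel]
  have h1 := abs_le.1 (h k (by omega))
  have h2 := abs_le.1 (h (k + l) (by omega))
  have h3 := abs_le.1 (h (k + 2 * l) (by omega))
  push_cast at h1 h2 h3
  rw [← mul_div_mul_left (w (k + 2 * l) - w (k + l)) _ ha.ne',
    ← mul_div_mul_left (w (k + l) - w k) _ ha.ne']
  refine div_add_div_le_six (l := l) (by exact_mod_cast hl) ?_ ?_ <;> rw [abs_le] <;>
    constructor <;> linarith

lemma exists_subset_perronFactor_le {M : ℕ} (hM : 1 ≤ M) :
    ∃ U : Finset ℝ, ↑U ⊆ { x : ℝ | ∃ n : ℕ, 1 ≤ n ∧ x = Real.sin n / n } ∧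
      U.card = M ∧ perronFactor U ≤ 6 := by
  obtain ⟨δ, a, n, hδ, ha, h⟩ := exists_near_progression_s3 M
  have hδ' : 0 < |δ| := abs_pos.2 hδ
  have hsub : ∀ w : ℕ → ℝ, (∀ i < M, ∃ n : ℕ, 1 ≤ n ∧ w i = Real.sin n / n) →
      (↑((List.range M).map w).toFinset : Set ℝ) ⊆
        { x : ℝ | ∃ n : ℕ, 1 ≤ n ∧ x = Real.sin n / n } := by
    intro w hw x hx
    simp only [List.coe_toFinset, List.mem_map, List.mem_range, Set.mem_ofPred_eq] at hx
    obtain ⟨i, hi, rfl⟩ := hx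
    exact hw i hi
  rcases lt_or_gt_of_ne hδ with hneg | hpos
  · -- For `δ < 0` the points are enumerated in the reverse order, which shifts them by `b = M`.
    have key := perronFactor_le_of_near hM (w := fun i => Real.sin (n (M - i)) / n (M - i))
      (a := a / |δ|) (b := M) (by positivity) (by
        intro i hi
        have h1 := (h (M - i) (by omega)).2
        have hc : ((M - i : ℕ) : ℝ) = M - i := by push_cast [hi.le]; ring
        have e : a / |δ| * (Real.sin (n (M - i)) / n (M - i)) + M - i
            = (a * (Real.sin (n (M - i)) / n (M - i)) - (M - i : ℕ) * δ) / |δ| := by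
          rw [hc, abs_of_neg hneg]
          field_simp
          ring
        rw [e, abs_div, abs_abs, div_le_iff₀ hδ']
        linarith)
    exact ⟨_, hsub _ fun i hi => ⟨n (M - i), (h _ (by omega)).1, rfl⟩, key⟩
  · have key := perronFactor_le_of_near hM (w := fun i => Real.sin (n i) / n i)
      (a := a / |δ|) (b := 0) (by positivity) (by
        intro i hi
        have h1 := (h i hi.le).2
        have e : a / |δ| * (Real.sin (n i) / n i) + 0 - i
            = (a * (Real.sin (n i) / n i) - i * δ) / |δ| := by
          rw [abs_of_pos hpos]
          field_simp
          ring
        rw [e, abs_div, abs_abs, div_le_iff₀ hδ']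
        linarith)
    exact ⟨_, hsub _ fun i hi => ⟨n i, (h _ hi.le).1, rfl⟩, key⟩

/-- For every `N` there is a subset of `Ω_s = { sin n / n : n ≥ 1 }` of cardinality `2^N`
whose Perron factor is at most `6`; consequently `P_{Ω_s} ≤ 6 < ∞`. -/
theorem omega_s_perron (Ωs : Set ℝ) (hΩs : Ωs = { x : ℝ | ∃ n : ℕ, 1 ≤ n ∧ x = Real.sin n / n }) :
    (∀ N : ℕ, ∃ U : Finset ℝ, ↑U ⊆ Ωs ∧ U.card = 2 ^ N ∧ perronFactor U ≤ 6) ∧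
    perronCapacity Ωs ≤ 6 ∧ perronCapacity Ωs < ⊤ := by
  subst hΩs
  have main : ∀ N : ℕ, ∃ U : Finset ℝ,
      ↑U ⊆ { x : ℝ | ∃ n : ℕ, 1 ≤ n ∧ x = Real.sin n / n } ∧
        U.card = 2 ^ N ∧ perronFactor U ≤ 6 :=
    fun N => exists_subset_perronFactor_le Nat.one_le_two_pow
  have cap : perronCapacity { x : ℝ | ∃ n : ℕ, 1 ≤ n ∧ x = Real.sin n / n } ≤ 6 := by
    unfold perronCapacity
    refine (Filter.liminf_le_liminf (v := fun _ => (6 : ℝ≥0∞))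
      (Eventually.of_forall fun N => ?_)).trans (by simp)
    obtain ⟨U, hU, hc, hP⟩ := main N
    refine (iInf_le_of_le U (iInf_le_of_le hU (iInf_le _ hc))).trans ?_
    exact ENNReal.ofReal_le_of_le_toReal (by simpa using hP)
  exact ⟨main, cap, cap.trans_lt (by simp)⟩
end
end

section
/- Let a > 0 be a real number, N ∈ ℕ*, and let ε : H_{a,N} → (0,1) be a function on the homogeneous set H_{a,N} := { ka : 1 ≤ k ≤ 2^N } satisfying 2^N · sup_{x ∈ H_{a,N}} ε(x) ≤ 1/2. Then the perturbed set H_{a,N}(ε) := { (1 + ε(x))·x : x ∈ H_{a,N} } has cardinality 2^N and its Perron factor satisfies G_{H_{a,N}(ε)} ≤ 6. -/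
/-!
Write `u k = (1 + ε (k a)) k a`. As `0 < ε (k a) ≤ 1 / (2 * 2 ^ N)` and `k ≤ 2 ^ N`, the point `k a`
moves to the right by a positive amount that is at most `a / 2`. Hence
`|(u j - u i) - (j - i) a| < a / 2` for any two indices `i`, `j`. In particular `u` is strictly
increasing, so the perturbed set has `2 ^ N` elements and its `k`-th smallest element is `u k`
(`nthU_image_of_strictMonoOn`). Two adjacent gaps of index length `l ≥ 1` both lie between
`(l - 1 / 2) a` and `(l + 1 / 2) a`, so each of their two quotients is at most
`(l + 1 / 2) / (l - 1 / 2) ≤ 3`, and the sum of the quotients is at most `6`.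
-/

open Real

noncomputable section

/-- A strictly increasing enumeration of a finite set of reals lists its order statistics. -/
lemma nthU_image_of_strictMonoOn {n : ℕ} {u : ℕ → ℝ} (hu : StrictMonoOn u (Set.Icc 1 n))
    {k : ℕ} (hk : 1 ≤ k) (hkn : k ≤ n) :
    nthU ((Finset.Icc 1 n).image u) k = u k := by
  have hlt : ((List.range' 1 n).map u).Pairwise (· < ·) := by
    rw [List.pairwise_map]
    refine (List.pairwise_lt_range' (s := 1) (n := n)).imp_of_mem ?_
    intro i j hi hj hij
    rw [List.mem_range'_1] at hi hj
    exact hu ⟨hi.1, by omega⟩ ⟨hj.1, by omega⟩ hij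
  have himage : (Finset.Icc 1 n).image u = ((List.range' 1 n).map u).toFinset := by
    ext x
    simp only [Finset.mem_image, Finset.mem_Icc, List.mem_toFinset, List.mem_map,
      List.mem_range'_1]
    constructor <;> rintro ⟨i, hi, rfl⟩ <;> exact ⟨i, by omega, rfl⟩
  have hsort : ((Finset.Icc 1 n).image u).sort (· ≤ ·) = (List.range' 1 n).map u := by
    rw [himage]
    exact (List.toFinset_sort (· ≤ ·) (hlt.imp ne_of_lt)).2 (hlt.imp le_of_lt)
  have hlen : k - 1 < ((List.range' 1 n).map u).length := by
    simp only [List.length_map, List.length_range']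
    omega
  rw [nthU, hsort, List.getD_eq_getElem _ _ hlen, List.getElem_map, List.getElem_range']
  congr 1
  omega

/-- The quotient of two gaps that differ from `l a` by less than `a / 2` is at most `3`; only the
upper bound on the numerator and the lower bound on the denominator matter. -/
lemma gap_div_gap_le_three {a l p q : ℝ} (ha : 0 < a) (hl : 1 ≤ l)
    (hp : p < l * a + a / 2) (hq : l * a - a / 2 < q) : p / q ≤ 3 := by
  have hla : a ≤ l * a := le_mul_of_one_le_left ha.le hl
  rw [div_le_iff₀ (by linarith)]
  linarith

/-- A small perturbation of the homogeneous set `H_{a,N} = { ka : 1 ≤ k ≤ 2^N }` has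
cardinality `2^N` and Perron factor at most `6`. -/
theorem perronFactor_perturbed_homogeneous (a : ℝ) (ha : 0 < a) (N : ℕ) (hN : 1 ≤ N)
    (ε : ℝ → ℝ)
    (hε : ∀ x ∈ (Finset.Icc 1 (2 ^ N)).image (fun k : ℕ => (k : ℝ) * a),
      ε x ∈ Set.Ioo (0 : ℝ) 1)
    (hsmall : ∀ x ∈ (Finset.Icc 1 (2 ^ N)).image (fun k : ℕ => (k : ℝ) * a),
      (2 : ℝ) ^ N * ε x ≤ 1 / 2) :
    (((Finset.Icc 1 (2 ^ N)).image (fun k : ℕ => (k : ℝ) * a)).image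
        (fun x => (1 + ε x) * x)).card = 2 ^ N ∧
    perronFactor (((Finset.Icc 1 (2 ^ N)).image (fun k : ℕ => (k : ℝ) * a)).image
        (fun x => (1 + ε x) * x)) ≤ 6 := by
  rw [Finset.image_image]
  set u : ℕ → ℝ := (fun x => (1 + ε x) * x) ∘ (fun k : ℕ => (k : ℝ) * a) with hu
  have hshift : ∀ k ∈ Set.Icc 1 (2 ^ N), k * a < u k ∧ u k ≤ k * a + a / 2 := by
    intro k hk
    have hmem : (k : ℝ) * a ∈ (Finset.Icc 1 (2 ^ N)).image (fun k : ℕ => (k : ℝ) * a) :=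
      Finset.mem_image_of_mem _ (Finset.mem_Icc.2 hk)
    have hpos : 0 < ε (k * a) := (hε _ hmem).1
    have hk0 : (0 : ℝ) < k := by exact_mod_cast hk.1
    have hkN : (k : ℝ) ≤ 2 ^ N := by exact_mod_cast hk.2
    have hεk : k * ε (k * a) ≤ 1 / 2 :=
      (mul_le_mul_of_nonneg_right hkN hpos.le).trans (hsmall _ hmem)
    have huk : u k = k * a + k * ε (k * a) * a := by
      simp only [hu, Function.comp_apply]
      ring
    have hlow : 0 < k * ε (k * a) * a := by positivity
    have hup : k * ε (k * a) * a ≤ 1 / 2 * a := mul_le_mul_of_nonneg_right hεk ha.le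
    constructor <;> linarith
  have hmono : StrictMonoOn u (Set.Icc 1 (2 ^ N)) := by
    intro i hi j hj hij
    have hij' : (i : ℝ) + 1 ≤ j := by exact_mod_cast hij
    have hmul : ((i : ℝ) + 1) * a ≤ j * a := mul_le_mul_of_nonneg_right hij' ha.le
    linarith [(hshift i hi).2, (hshift j hj).1]
  have hcard : ((Finset.Icc 1 (2 ^ N)).image u).card = 2 ^ N := by
    rw [Finset.card_image_of_injOn (by simpa using hmono.injOn), Nat.card_Icc,
      Nat.add_sub_cancel]
  -- For `N = 1` no pair `(k, l)` is admissible and the supremum is `sSup ∅ = 0`, whence the side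
  -- condition `0 ≤ 6`.
  refine ⟨hcard, Real.sSup_le ?_ (by norm_num)⟩
  rintro g ⟨k, l, hk, hl, hkl, rfl⟩
  rw [hcard] at hkl
  rw [nthU_image_of_strictMonoOn hmono hk (by omega),
    nthU_image_of_strictMonoOn hmono (k := k + l) (by omega) (by omega),
    nthU_image_of_strictMonoOn hmono (k := k + 2 * l) (by omega) hkl]
  have h₀ := hshift k ⟨hk, by omega⟩
  have h₁ := hshift (k + l) ⟨by omega, by omega⟩
  have h₂ := hshift (k + 2 * l) ⟨by omega, hkl⟩
  push_cast at h₁ h₂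
  have hl' : (1 : ℝ) ≤ l := by exact_mod_cast hl
  have hright := gap_div_gap_le_three (p := u (k + 2 * l) - u (k + l))
    (q := u (k + l) - u k) ha hl' (by linarith) (by linarith)
  have hleft := gap_div_gap_le_three (p := u (k + l) - u k)
    (q := u (k + 2 * l) - u (k + l)) ha hl' (by linarith) (by linarith)
  linarith
end
end

section
/- Let a > 0 be a real number, N ∈ ℕ*, and let ε : {1,…,2^N} → (0,1) satisfy 2^N · max_k ε(k) ≤ 1/2. Define h_k := (1 + ε(k))·k·a for 1 ≤ k ≤ 2^N. Then for all integers k, l with 1 ≤ l ≤ k and k + 2l ≤ 2^N, one has (h_{k+2l} − h_{k+l})/(h_{k+l} − h_k) ≤ 3. -/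
/-!
Write `h m = (m + e m) * a` with `e m = ε m * m`. Since `m ≤ 2 ^ N` and `2 ^ N * ε m ≤ 1 / 2`,
each `e m` lies in `(0, 1 / 2]`. Hence `h (k + l) - h k = (l + e (k + l) - e k) * a` is positive,
and the bound is equivalent to `e (k + 2 * l) + 3 * e k ≤ 2 * l + 4 * e (k + l)`, whose left side
is at most `2 ≤ 2 * l`.
-/

open Real

/-- If `ε : {1,…,2^N} → (0,1)` satisfies `2^N · ε k ≤ 1/2` for each `k`, and
`h_k = (1 + ε k) · k · a`, then for `1 ≤ l ≤ k` with `k + 2l ≤ 2^N` the ratio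
`(h_{k+2l} − h_{k+l}) / (h_{k+l} − h_k)` is at most `3`. -/
theorem perturbed_ratio_le_three (a : ℝ) (ha : 0 < a) (N : ℕ) (hN : 1 ≤ N)
    (ε : ℕ → ℝ) (hε : ∀ k : ℕ, 1 ≤ k → k ≤ 2 ^ N → ε k ∈ Set.Ioo (0 : ℝ) 1)
    (hsmall : ∀ k : ℕ, 1 ≤ k → k ≤ 2 ^ N → (2 : ℝ) ^ N * ε k ≤ 1 / 2)
    (h : ℕ → ℝ) (hh : ∀ k : ℕ, h k = (1 + ε k) * k * a) :
    ∀ k l : ℕ, 1 ≤ l → l ≤ k → k + 2 * l ≤ 2 ^ N →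
      (h (k + 2 * l) - h (k + l)) / (h (k + l) - h k) ≤ 3 := by
  intro k l hl hlk hkl
  have key : ∀ m : ℕ, 1 ≤ m → m ≤ 2 ^ N → 0 < ε m * m ∧ ε m * m ≤ 1 / 2 := by
    intro m h1 h2
    have hpos := (hε m h1 h2).1
    have hs := hsmall m h1 h2
    have hm : (1 : ℝ) ≤ m := by exact_mod_cast h1
    have hm' : (m : ℝ) ≤ 2 ^ N := by exact_mod_cast h2
    exact ⟨by positivity, by nlinarith⟩
  obtain ⟨p0, q0⟩ := key k (by omega) (by omega)
  obtain ⟨p1, q1⟩ := key (k + l) (by omega) (by omega)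
  obtain ⟨p2, q2⟩ := key (k + 2 * l) (by omega) hkl
  have hl' : (1 : ℝ) ≤ l := by exact_mod_cast hl
  have hden : h (k + l) - h k = (l + ε (k + l) * (k + l : ℕ) - ε k * k) * a := by
    rw [hh, hh]; push_cast; ring
  have hnum : h (k + 2 * l) - h (k + l) =
      (l + ε (k + 2 * l) * (k + 2 * l : ℕ) - ε (k + l) * (k + l : ℕ)) * a := by
    rw [hh, hh]; push_cast; ring
  rw [hden, hnum, mul_div_mul_right _ _ ha.ne', div_le_iff₀ (by linarith)]
  linarith
end
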